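/- Let L ≥ 2 and θ ∈ ℝ. The self-dual Hamiltonian H_SD(θ) = H_BLBQ(θ) + U_KT H_BLBQ(θ) U_KT satisfies the exact operator identity H_SD(θ) = H_XXZ(θ) + sinθ · Σ_{j=1}^{L−1} ( 2 h_j h_{j+1} + n_j n_{j+1} + 2 ), where H_XXZ(θ) = (cosθ−sinθ) Σ_{j=1}^{L−1} (−σˣ_jσˣ_{j+1} + σʸ_jσʸ_{j+1}) + sinθ Σ_{j=1}^{L−1} σᶻ_jσᶻ_{j+1}. -/

import Mathlib

noncomputable section
open Complex Matrix

/-- The Hilbert space operators of the `L`-site spin-1 chain: matrices on `(ℂ³)^{⊗L}`,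
with the tensor factors indexed by sites and the single-site ordered basis `(|+⟩,|0⟩,|−⟩)`. -/
abbrev Op (L : ℕ) : Type := Matrix (Fin L → Fin 3) (Fin L → Fin 3) ℂ

/-- The spin-1 matrix `Sˣ`. -/
def Sx : Matrix (Fin 3) (Fin 3) ℂ :=
  ((Real.sqrt 2 : ℝ) : ℂ)⁻¹ • !![0, 1, 0; 1, 0, 1; 0, 1, 0]

/-- The spin-1 matrix `Sʸ`. -/
def Sy : Matrix (Fin 3) (Fin 3) ℂ :=
  ((Real.sqrt 2 : ℝ) : ℂ)⁻¹ • !![0, -I, 0; I, 0, -I; 0, I, 0]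

/-- The spin-1 matrix `Sᶻ = diag(1,0,−1)`. -/
def Sz : Matrix (Fin 3) (Fin 3) ℂ := !![1, 0, 0; 0, 0, 0; 0, 0, -1]

/-- `site A j` is the one-site operator `A` acting on site `j` and identity elsewhere. -/
def site {L : ℕ} (A : Matrix (Fin 3) (Fin 3) ℂ) (j : Fin L) : Op L :=
  Matrix.of fun f g => ∏ k : Fin L, if k = j then A (f k) (g k) else (if f k = g k then 1 else 0)

/-- One factor `exp(iπ Sᶻ_u Sˣ_v)` of the Kennedy–Tasaki transformation. -/
def ktFactor {L : ℕ} (u v : Fin L) : Op L :=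
  NormedSpace.exp (((Real.pi : ℂ) * I) • (site Sz u * site Sx v))

/-- The Kennedy–Tasaki transformation `U_KT = ∏_{1 ≤ u < v ≤ L} exp(iπ Sᶻ_u Sˣ_v)`
(the factors pairwise commute, so the ordering is immaterial). -/
def UKT (L : ℕ) : Op L :=
  ((List.finRange L).map fun u =>
    ((List.finRange L).map fun v => if u < v then ktFactor u v else 1).prod).prod

/-- The p-wave basis vector `|↑⟩ = (|+⟩ − |−⟩)/√2`. -/
def up : Fin 3 → ℂ := ![((Real.sqrt 2 : ℝ) : ℂ)⁻¹, 0, -((Real.sqrt 2 : ℝ) : ℂ)⁻¹]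

/-- The p-wave basis vector `|↓⟩ = |0⟩`. -/
def down : Fin 3 → ℂ := ![0, 1, 0]

/-- The p-wave basis vector `|h⟩ = (|+⟩ + |−⟩)/√2`. -/
def hole : Fin 3 → ℂ := ![((Real.sqrt 2 : ℝ) : ℂ)⁻¹, 0, ((Real.sqrt 2 : ℝ) : ℂ)⁻¹]

/-- The rank-one operator `|a⟩⟨b|`. -/
def ketbra (a b : Fin 3 → ℂ) : Matrix (Fin 3) (Fin 3) ℂ := Matrix.vecMulVec a (star b)

/-- `σˣ = |↑⟩⟨↓| + |↓⟩⟨↑|` (annihilating `|h⟩`). -/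
def sigx : Matrix (Fin 3) (Fin 3) ℂ := ketbra up down + ketbra down up

/-- `σʸ = −i|↑⟩⟨↓| + i|↓⟩⟨↑|` (annihilating `|h⟩`). -/
def sigy : Matrix (Fin 3) (Fin 3) ℂ := (-I) • ketbra up down + I • ketbra down up

/-- `σᶻ = |↑⟩⟨↑| − |↓⟩⟨↓|` (annihilating `|h⟩`). -/
def sigz : Matrix (Fin 3) (Fin 3) ℂ := ketbra up up - ketbra down down

/-- `n = |↑⟩⟨↑| + |↓⟩⟨↓|` (annihilating `|h⟩`). -/
def nMat : Matrix (Fin 3) (Fin 3) ℂ := ketbra up up + ketbra down down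

/-- `h = |h⟩⟨h|`. -/
def hMat : Matrix (Fin 3) (Fin 3) ℂ := ketbra hole hole

/-- `P = ⊗_{j=1}^L n_j`, the orthogonal projection onto the hole-free subspace. -/
def Pproj (L : ℕ) : Op L := Matrix.of fun f g => ∏ k : Fin L, nMat (f k) (g k)

/-- The Heisenberg coupling `S_j · S_k`. -/
def heis {L : ℕ} (j k : Fin L) : Op L :=
  site Sx j * site Sx k + site Sy j * site Sy k + site Sz j * site Sz k

/-- The bilinear-biquadratic Hamiltonian
`H_BLBQ(θ) = Σ_{j=1}^{L−1} [cosθ (S_j·S_{j+1}) + sinθ (S_j·S_{j+1})²]`. -/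
def HBLBQ (L : ℕ) (θ : ℝ) : Op L :=
  ∑ j : Fin L, if h : (j : ℕ) + 1 < L then
    ((Real.cos θ : ℝ) : ℂ) • heis j ⟨(j : ℕ) + 1, h⟩
      + ((Real.sin θ : ℝ) : ℂ) • (heis j ⟨(j : ℕ) + 1, h⟩) ^ 2
  else 0

/-- The self-dual Hamiltonian `H_SD(θ) = H_BLBQ(θ) + U_KT H_BLBQ(θ) U_KT`. -/
def HSD (L : ℕ) (θ : ℝ) : Op L := HBLBQ L θ + UKT L * HBLBQ L θ * UKT L

/-- The spin-1/2 XXZ Hamiltonian written in the p-wave basis: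
`H_XXZ(θ) = (cosθ−sinθ) Σ_j (−σˣ_jσˣ_{j+1} + σʸ_jσʸ_{j+1}) + sinθ Σ_j σᶻ_jσᶻ_{j+1}`. -/
def HXXZ (L : ℕ) (θ : ℝ) : Op L :=
  ((Real.cos θ - Real.sin θ : ℝ) : ℂ) •
    (∑ j : Fin L, if h : (j : ℕ) + 1 < L then
      -(site sigx j * site sigx ⟨(j : ℕ) + 1, h⟩) + site sigy j * site sigy ⟨(j : ℕ) + 1, h⟩
    else 0)
  + ((Real.sin θ : ℝ) : ℂ) •
    (∑ j : Fin L, if h : (j : ℕ) + 1 < L then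
      site sigz j * site sigz ⟨(j : ℕ) + 1, h⟩
    else 0)

/-- The global product `∏_{j=1}^L exp(c • A_j)` of commuting single-site exponentials. -/
def globalProd (L : ℕ) (A : Matrix (Fin 3) (Fin 3) ℂ) (c : ℂ) : Op L :=
  ((List.finRange L).map fun j => NormedSpace.exp (c • site A j)).prod

/-- The symmetry flux `F^y_j = exp(−iπ Σ_{k<j} Sʸ_k) · Sʸ_j`. -/
def fluxY (L : ℕ) (j : Fin L) : Op L :=
  NormedSpace.exp ((-((Real.pi : ℂ) * I)) •
    ∑ k : Fin L, if (k : ℕ) < (j : ℕ) then site Sy k else 0) * site Sy j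
/-!
Since `(Sᶻ_u Sˣ_v)³ = Sᶻ_u Sˣ_v`, each Kennedy–Tasaki factor is the controlled sign
`1 - 2 (Sᶻ_u)² (Sˣ_v)²`. These commuting involutions move past a one-site operator on `j` at the
price of `π`-rotations about `z` to the left of `j` and about `x` to its right, so `U_KT` turns
`A_j` into a string; for the product of two neighbours the strings square to one away from the bond.
In this way `S_j · S_{j+1} = SˣSˣ + σʸσʸ + SᶻSᶻ` becomes `-(SˣSˣ + σˣσˣ + SᶻSᶻ)`, and the claim
reduces to the two-site algebra of these operators and their squares.
-/

section Monoid

variable {M ι : Type*} [Monoid M]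

theorem list_prod_mul_of_forall_mul {f c : ι → M} {x : M} {l : List ι}
    (hx : ∀ i ∈ l, f i * x = x * c i * f i) (hc : ∀ i ∈ l, ∀ k ∈ l, Commute (f i) (c k)) :
    (l.map f).prod * x = x * (l.map c).prod * (l.map f).prod := by
  induction l with
  | nil => simp
  | cons i l ih =>
    simp only [List.forall_mem_cons] at hx hc
    have hcl : Commute (f i) (l.map c).prod :=
      Commute.list_prod_right _ _ (List.forall_mem_map.2 hc.1.2)
    simp only [List.map_cons, List.prod_cons]
    calc f i * (l.map f).prod * x
        = f i * x * (l.map c).prod * (l.map f).prod := by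
          rw [mul_assoc, ih hx.2 fun k hk => (hc.2 k hk).2]; simp only [mul_assoc]
      _ = x * c i * (f i * (l.map c).prod) * (l.map f).prod := by
          rw [hx.1]; simp only [mul_assoc]
      _ = x * (c i * (l.map c).prod) * (f i * (l.map f).prod) := by
          rw [hcl.eq]; simp only [mul_assoc]

theorem list_prod_mul_self_eq_one {f : ι → M} {l : List ι} (hf : ∀ i ∈ l, f i * f i = 1)
    (hc : ∀ i ∈ l, ∀ k ∈ l, Commute (f i) (f k)) : (l.map f).prod * (l.map f).prod = 1 := by
  induction l with
  | nil => simp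
  | cons i l ih =>
    simp only [List.forall_mem_cons] at hf hc
    have hcl : Commute (l.map f).prod (f i) :=
      (Commute.list_prod_right _ _ (List.forall_mem_map.2 hc.1.2)).symm
    rw [List.map_cons, List.prod_cons, hcl.mul_mul_mul_comm, hf.1,
      ih hf.2 fun k hk => (hc.2 k hk).2, one_mul]

theorem list_prod_map_eq_of_forall_ne {f : ι → M} {l : List ι} (hl : l.Nodup)
    {i : ι} (hi : i ∈ l) (hf : ∀ k ∈ l, k ≠ i → f k = 1) : (l.map f).prod = f i := by
  classical
  rw [List.prod_map_eq_pow_single i f fun k hki hk => hf k hk hki,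
    List.count_eq_one_of_mem hl hi, pow_one]

theorem list_prod_map_ite_one (p : ι → Prop) [DecidablePred p] (f : ι → M) (l : List ι) :
    (l.map fun i => if p i then f i else 1).prod = ((l.filter p).map f).prod := by
  induction l with
  | nil => simp
  | cons i l ih => by_cases hi : p i <;> simp [hi, ih]

theorem list_prod_map_prod_map {κ : Type*} (f : ι → κ → M) (l : List ι) (l' : List κ) :
    (l.map fun i => (l'.map (f i)).prod).prod = ((l ×ˢ l').map fun p => f p.1 p.2).prod := by
  induction l with
  | nil => simp
  | cons i l ih => simp [List.product_cons, ih, Function.comp_def]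

theorem pow_two_mul_add_one_of_pow_three_eq {x : M} (hx : x ^ 3 = x) (k : ℕ) :
    x ^ (2 * k + 1) = x := by
  induction k with
  | zero => simp
  | succ k ih => rw [show 2 * (k + 1) + 1 = 2 * k + 1 + 2 by ring, pow_add, ih, ← pow_succ', hx]

theorem isIdempotentElem_sq_of_pow_three_eq {x : M} (hx : x ^ 3 = x) :
    IsIdempotentElem (x ^ 2) := by
  rw [IsIdempotentElem, ← pow_add, pow_succ, hx, ← sq]

end Monoid

section Reflection

variable {R : Type*} [Ring R]

/-- The reflection `1 - 2e` along an idempotent `e`; on the range of `e` it is `-1`. -/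
def reflection (e : R) : R := 1 - 2 * e

theorem reflection_mul_self {e : R} (he : IsIdempotentElem e) :
    reflection e * reflection e = 1 := by
  have h : e * e = e := he
  simp only [reflection]
  noncomm_ring [h]

theorem commute_reflection_right {x e : R} (h : Commute x e) : Commute x (reflection e) :=
  (Commute.one_right x).sub_right ((Commute.ofNat_right x 2).mul_right h)

theorem map_reflection {S F : Type*} [Ring S] [FunLike F R S] [RingHomClass F R S] (φ : F)
    (e : R) : φ (reflection e) = reflection (φ e) := by
  simp only [reflection, map_sub, map_mul, map_one, map_ofNat]

/-- `1 - 2pq` is the controlled sign of two commuting projections: moving an `x` of parity `a` with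
respect to `p` through it costs `a` factors `1 - 2q`. -/
theorem reflection_mul_mul [IsAddTorsionFree R] {p q x : R} {a : ℕ} (hq : IsIdempotentElem q)
    (hpq : Commute p q) (hxq : Commute x q)
    (hx : reflection p * x = (-1) ^ a * (x * reflection p)) :
    reflection (p * q) * x = x * reflection q ^ a * reflection (p * q) := by
  have hqpq : q * (p * q) = p * q := by rw [hpq.eq, ← mul_assoc, hq.eq]
  have hqx : p * q * x = p * x * q := by rw [mul_assoc, ← hxq.eq, mul_assoc]
  have hsq : reflection q ^ 2 = 1 := by rw [sq, reflection_mul_self hq]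
  have htwo : Function.Injective fun y : R => 2 • y := nsmul_right_injective two_ne_zero
  simp only [reflection] at hx
  rcases a.even_or_odd' with ⟨b, rfl | rfl⟩
  · have hpx : p * x = x * p := htwo <| by
      rw [pow_mul, neg_one_sq, one_pow] at hx
      linear_combination (norm := noncomm_ring) -hx
    have hcomm : p * q * x = x * (p * q) := by rw [hqx, hpx, mul_assoc]
    rw [pow_mul, hsq, one_pow, mul_one, reflection]
    linear_combination (norm := noncomm_ring) -2 * hcomm
  · have hpx : p * x = x - x * p := htwo <| by
      rw [pow_succ, pow_mul, neg_one_sq, one_pow] at hx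
      linear_combination (norm := noncomm_ring) -hx
    have hflip : p * q * x = x * q - x * (p * q) := by rw [hqx, hpx, sub_mul, mul_assoc]
    rw [pow_succ, pow_mul, hsq, one_pow, one_mul]
    simp only [reflection]
    linear_combination (norm := noncomm_ring) -2 * hflip - 4 * x * hqpq

end Reflection

theorem sq_add_sq_of_mul_eq_neg_mul {R : Type*} [Ring R] {x y z w : R} (hxy : x * y = -(x * w))
    (hyx : y * x = -(w * x)) (hzy : z * y = -(z * w)) (hyz : y * z = -(w * z)) :
    (x + y + z) ^ 2 + (x + w + z) ^ 2 =
      2 • (x * z + z * x) + (2 • (x ^ 2 + z ^ 2) + y ^ 2 + w ^ 2) := by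
  linear_combination (norm := noncomm_ring) hxy + hyx + hzy + hyz

section Exponential

variable {A : Type*} [Ring A] [TopologicalSpace A] [IsTopologicalRing A] [T2Space A]
  [Algebra ℂ A] [ContinuousSMul ℂ A] {M : A}

/-- Rodrigues' rotation formula. -/
theorem exp_smul_of_pow_three_eq (hM : M ^ 3 = M) (c : ℂ) :
    NormedSpace.exp (c • M) = 1 - M ^ 2 + Complex.cosh c • M ^ 2 + Complex.sinh c • M := by
  let term (m : ℕ) : A := (m.factorial⁻¹ : ℂ) • (c • M) ^ m
  have hterm (m : ℕ) : term m = (c ^ m / m.factorial) • M ^ m := by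
    simp only [term, smul_pow, smul_smul, div_eq_inv_mul]
  have hodd : HasSum (fun k => term (2 * k + 1)) (Complex.sinh c • M) := by
    refine ((Complex.hasSum_sinh c).smul_const M).congr_fun fun k => ?_
    rw [hterm, pow_two_mul_add_one_of_pow_three_eq hM]
  have heven : HasSum (fun k => term (2 * k)) (1 - M ^ 2 + Complex.cosh c • M ^ 2) := by
    refine ((hasSum_ite_eq 0 (1 - M ^ 2)).add
      ((Complex.hasSum_cosh c).smul_const (M ^ 2))).congr_fun fun k => ?_
    rcases k with _ | k
    · simp [term]
    · have hpow : M ^ (2 * (k + 1)) = M ^ 2 := by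
        rw [mul_add_one, pow_succ, pow_two_mul_add_one_of_pow_three_eq hM, sq]
      rw [if_neg k.succ_ne_zero, zero_add, hterm, hpow]
  rw [NormedSpace.exp_eq_tsum ℂ]
  exact (heven.even_add_odd hodd).tsum_eq

theorem exp_pi_mul_I_smul_of_pow_three_eq (hM : M ^ 3 = M) :
    NormedSpace.exp (((Real.pi : ℂ) * I) • M) = reflection (M ^ 2) := by
  rw [exp_smul_of_pow_three_eq hM, Complex.cosh_mul_I, Complex.sinh_mul_I, Complex.cos_pi,
    Complex.sin_pi, zero_mul, zero_smul, neg_one_smul, reflection]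
  noncomm_ring

end Exponential

section Tensor

instance {m n R : Type*} [AddMonoid R] [IsAddTorsionFree R] : IsAddTorsionFree (Matrix m n R) :=
  inferInstanceAs (IsAddTorsionFree (m → n → R))

variable {ι n R : Type*} [Fintype ι] [DecidableEq ι] [Fintype n] [DecidableEq n] [CommSemiring R]

/-- The Kronecker product `⨂ k, A k` of a finite family of square matrices, as a homomorphism from
the pointwise product of families to the product of matrices. -/
def piKronecker : (ι → Matrix n n R) →* Matrix (ι → n) (ι → n) R where
  toFun A := Matrix.of fun f g => ∏ k, A k (f k) (g k)
  map_one' := by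
    ext f g
    simp [Matrix.one_apply, Fintype.prod_ite_zero, funext_iff]
  map_mul' A B := by
    ext f g
    simp [Matrix.mul_apply, Finset.prod_univ_sum, Finset.prod_mul_distrib]

theorem piKronecker_apply (A : ι → Matrix n n R) (f g : ι → n) :
    piKronecker A f g = ∏ k, A k (f k) (g k) := rfl

theorem piKronecker_mulSingle_apply (j : ι) (A : Matrix n n R) (f g : ι → n) :
    piKronecker (Pi.mulSingle j A) f g =
      A (f j) (g j) * ∏ k ∈ Finset.univ.erase j, (1 : Matrix n n R) (f k) (g k) := by
  rw [piKronecker_apply, ← Finset.mul_prod_erase _ _ (Finset.mem_univ j), Pi.mulSingle_eq_same]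
  congr 1
  refine Finset.prod_congr rfl fun k hk => ?_
  rw [Pi.mulSingle_eq_of_ne (Finset.ne_of_mem_erase hk)]

end Tensor

section Site

variable {L : ℕ} {A B : Matrix (Fin 3) (Fin 3) ℂ} {j k : Fin L}

theorem site_eq_piKronecker (A : Matrix (Fin 3) (Fin 3) ℂ) (j : Fin L) :
    site A j = piKronecker (Pi.mulSingle j A) := by
  ext f g
  rw [piKronecker_apply, site, Matrix.of_apply]
  refine Finset.prod_congr rfl fun k _ => ?_
  by_cases hk : k = j
  · subst hk; simp
  · simp [hk, Matrix.one_apply]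

/-- `A ↦ A_j` as an algebra homomorphism. -/
def siteHom (j : Fin L) : Matrix (Fin 3) (Fin 3) ℂ →ₐ[ℂ] Op L :=
  AlgHom.ofLinearMap
    { toFun A := site A j
      map_add' A B := by
        ext f g
        simp [site_eq_piKronecker, piKronecker_mulSingle_apply, add_mul]
      map_smul' c A := by
        ext f g
        simp [site_eq_piKronecker, piKronecker_mulSingle_apply, mul_assoc] }
    (by simp [site_eq_piKronecker])
    fun A B => by simp [site_eq_piKronecker, Pi.mulSingle_mul]

theorem siteHom_apply (j : Fin L) (A : Matrix (Fin 3) (Fin 3) ℂ) : siteHom j A = site A j := rfl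

theorem site_mul (A B : Matrix (Fin 3) (Fin 3) ℂ) (j : Fin L) :
    site (A * B) j = site A j * site B j := map_mul (siteHom j) A B

theorem site_smul (c : ℂ) (A : Matrix (Fin 3) (Fin 3) ℂ) (j : Fin L) :
    site (c • A) j = c • site A j := map_smul (siteHom j) c A

theorem site_neg (A : Matrix (Fin 3) (Fin 3) ℂ) (j : Fin L) : site (-A) j = -site A j :=
  map_neg (siteHom j) A

theorem site_commute_of_ne (A B : Matrix (Fin 3) (Fin 3) ℂ) (hjk : j ≠ k) :
    Commute (site A j) (site B k) := by
  rw [site_eq_piKronecker, site_eq_piKronecker]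
  exact (Pi.mulSingle_commute hjk A B).map piKronecker

theorem site_commute (hAB : j = k → Commute A B) : Commute (site A j) (site B k) := by
  rcases eq_or_ne j k with rfl | hjk
  · exact (hAB rfl).map (siteHom j)
  · exact site_commute_of_ne A B hjk

theorem site_reflection_pow (e : Matrix (Fin 3) (Fin 3) ℂ) (a : ℕ) (j : Fin L) :
    site (reflection e ^ a) j = reflection (site e j) ^ a := by
  simp only [← siteHom_apply, map_pow, map_reflection]

theorem reflection_site_mul_site {e : Matrix (Fin 3) (Fin 3) ℂ} {a : ℕ}
    (h : reflection e * A = (-1) ^ a * (A * reflection e)) (j : Fin L) :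
    reflection (site e j) * site A j = (-1) ^ a * (site A j * reflection (site e j)) := by
  simp only [← siteHom_apply]
  simpa only [map_mul, map_pow, map_neg, map_one, map_reflection] using congrArg (siteHom j) h

/-- `A_j A_k`, the coupling of the same observable on two sites. -/
def bond (A : Matrix (Fin 3) (Fin 3) ℂ) (j k : Fin L) : Op L := site A j * site A k

theorem bond_mul (hjk : j ≠ k) (A B : Matrix (Fin 3) (Fin 3) ℂ) :
    bond A j k * bond B j k = bond (A * B) j k := by
  rw [bond, bond, bond, (site_commute_of_ne B A hjk).symm.mul_mul_mul_comm, site_mul, site_mul]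

theorem bond_sq (hjk : j ≠ k) (A : Matrix (Fin 3) (Fin 3) ℂ) :
    bond A j k ^ 2 = bond (A ^ 2) j k := by
  rw [sq, sq, bond_mul hjk]

theorem bond_smul (c : ℂ) (A : Matrix (Fin 3) (Fin 3) ℂ) (j k : Fin L) :
    bond (c • A) j k = c ^ 2 • bond A j k := by
  rw [bond, bond, site_smul, site_smul, smul_mul_smul_comm, sq]

theorem bond_mul_bond_eq_neg {A' B' : Matrix (Fin 3) (Fin 3) ℂ} {c : ℂ} (hjk : j ≠ k)
    (hc : c ^ 2 = -1) (h : A * B = c • (A' * B')) :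
    bond A j k * bond B j k = -(bond A' j k * bond B' j k) := by
  rw [bond_mul hjk, bond_mul hjk, h, bond_smul, hc, neg_one_smul]

end Site

section PWave

/-- The matrix units `|a⟩⟨b|` of the p-wave basis, ordered as `(|↑⟩, |↓⟩, |h⟩)`. -/
def pwaveUnit (a b : Fin 3) : Matrix (Fin 3) (Fin 3) ℂ :=
  ketbra (![up, down, hole] a) (![up, down, hole] b)

theorem pwaveUnit_apply (a b s t : Fin 3) :
    pwaveUnit a b s t = ![up, down, hole] a s * star (![up, down, hole] b t) := rfl

theorem inv_sqrt_two_mul_self :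
    ((Real.sqrt 2 : ℝ) : ℂ)⁻¹ * ((Real.sqrt 2 : ℝ) : ℂ)⁻¹ = 1 / 2 := by
  rw [← mul_inv, ← Complex.ofReal_mul, Real.mul_self_sqrt zero_le_two]
  norm_num

theorem pwave_orthonormal (a b : Fin 3) :
    star (![up, down, hole] a) ⬝ᵥ ![up, down, hole] b = if a = b then 1 else 0 := by
  fin_cases a <;> fin_cases b <;>
    simp [up, down, hole, dotProduct, Fin.sum_univ_three, inv_sqrt_two_mul_self] <;> norm_num

theorem pwaveUnit_mul (a b c d : Fin 3) :
    pwaveUnit a b * pwaveUnit c d = if b = c then pwaveUnit a d else 0 := by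
  rw [pwaveUnit, pwaveUnit, ketbra, ketbra, Matrix.vecMulVec_mul_vecMulVec, pwave_orthonormal]
  split_ifs <;> simp [pwaveUnit, ketbra]

theorem one_eq_pwaveUnit : 1 = pwaveUnit 0 0 + pwaveUnit 1 1 + pwaveUnit 2 2 := by
  ext a b
  fin_cases a <;> fin_cases b <;>
    simp [pwaveUnit_apply, up, down, hole, inv_sqrt_two_mul_self] <;>
    norm_num

theorem Sx_eq_pwaveUnit : Sx = pwaveUnit 1 2 + pwaveUnit 2 1 := by
  ext a b
  fin_cases a <;> fin_cases b <;>
    simp [Sx, pwaveUnit_apply, up, down, hole]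

theorem Sz_eq_pwaveUnit : Sz = pwaveUnit 0 2 + pwaveUnit 2 0 := by
  ext a b
  fin_cases a <;> fin_cases b <;>
    simp [Sz, pwaveUnit_apply, up, down, hole, inv_sqrt_two_mul_self] <;>
    norm_num

theorem sigx_eq_pwaveUnit : sigx = pwaveUnit 0 1 + pwaveUnit 1 0 := rfl

theorem sigy_eq_pwaveUnit : sigy = -I • pwaveUnit 0 1 + I • pwaveUnit 1 0 := rfl

theorem sigz_eq_pwaveUnit : sigz = pwaveUnit 0 0 - pwaveUnit 1 1 := rfl

theorem nMat_eq_pwaveUnit : nMat = pwaveUnit 0 0 + pwaveUnit 1 1 := rfl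

theorem hMat_eq_pwaveUnit : hMat = pwaveUnit 2 2 := rfl

theorem Sy_eq_sigy : Sy = sigy := by
  rw [sigy_eq_pwaveUnit]
  ext a b
  fin_cases a <;> fin_cases b <;> simp [Sy, pwaveUnit_apply, up, down, mul_comm]

theorem Sx_sq : Sx ^ 2 = pwaveUnit 1 1 + pwaveUnit 2 2 := by
  simp [Sx_eq_pwaveUnit, sq, add_mul, mul_add, pwaveUnit_mul, add_comm]

theorem Sz_sq : Sz ^ 2 = pwaveUnit 0 0 + pwaveUnit 2 2 := by
  simp [Sz_eq_pwaveUnit, sq, add_mul, mul_add, pwaveUnit_mul, add_comm]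

theorem Sx_pow_three : Sx ^ 3 = Sx := by
  rw [pow_succ, Sx_sq, Sx_eq_pwaveUnit]
  simp [add_mul, mul_add, pwaveUnit_mul]

theorem Sz_pow_three : Sz ^ 3 = Sz := by
  rw [pow_succ, Sz_sq, Sz_eq_pwaveUnit]
  simp [add_mul, mul_add, pwaveUnit_mul]

theorem commute_Sz_sq_Sx_sq : Commute (Sz ^ 2) (Sx ^ 2) := by
  rw [commute_iff_eq, Sz_sq, Sx_sq]
  simp [add_mul, mul_add, pwaveUnit_mul]

end PWave

section Rotation

/-- `exp(iπ Sˣ) = 1 - 2(Sˣ)²`, the rotation by `π` about the `x` axis. -/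
def rotX : Matrix (Fin 3) (Fin 3) ℂ := reflection (Sx ^ 2)

/-- `exp(iπ Sᶻ) = 1 - 2(Sᶻ)²`, the rotation by `π` about the `z` axis. -/
def rotZ : Matrix (Fin 3) (Fin 3) ℂ := reflection (Sz ^ 2)

theorem rotX_eq_pwaveUnit : rotX = pwaveUnit 0 0 - pwaveUnit 1 1 - pwaveUnit 2 2 := by
  rw [rotX, reflection, Sx_sq, one_eq_pwaveUnit]
  noncomm_ring

theorem rotZ_eq_pwaveUnit : rotZ = pwaveUnit 1 1 - pwaveUnit 0 0 - pwaveUnit 2 2 := by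
  rw [rotZ, reflection, Sz_sq, one_eq_pwaveUnit]
  noncomm_ring

theorem rotX_pow_mul_self (a : ℕ) : rotX ^ a * rotX ^ a = 1 := by
  rw [← (Commute.refl rotX).mul_pow, rotX,
    reflection_mul_self (isIdempotentElem_sq_of_pow_three_eq Sx_pow_three), one_pow]

theorem rotZ_pow_mul_self (b : ℕ) : rotZ ^ b * rotZ ^ b = 1 := by
  rw [← (Commute.refl rotZ).mul_pow, rotZ,
    reflection_mul_self (isIdempotentElem_sq_of_pow_three_eq Sz_pow_three), one_pow]

/-- `A` is conjugated to `(-1)ᵃ A` by the `π`-rotation about the `z` axis and to `(-1)ᵇ A` by the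
one about the `x` axis. -/
def HasParity (a b : ℕ) (A : Matrix (Fin 3) (Fin 3) ℂ) : Prop :=
  rotZ * A = (-1) ^ a * (A * rotZ) ∧ rotX * A = (-1) ^ b * (A * rotX)

theorem hasParity_Sx : HasParity 1 0 Sx := by
  simp [HasParity, rotX_eq_pwaveUnit, rotZ_eq_pwaveUnit, Sx_eq_pwaveUnit, sub_eq_add_neg, add_mul,
    mul_add, pwaveUnit_mul, add_comm]

theorem hasParity_Sy : HasParity 1 1 Sy := by
  simp [HasParity, rotX_eq_pwaveUnit, rotZ_eq_pwaveUnit, Sy_eq_sigy, sigy_eq_pwaveUnit, sub_mul,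
    mul_sub, add_mul, mul_add, pwaveUnit_mul, add_comm]

theorem hasParity_Sz : HasParity 0 1 Sz := by
  simp [HasParity, rotX_eq_pwaveUnit, rotZ_eq_pwaveUnit, Sz_eq_pwaveUnit, sub_eq_add_neg, add_mul,
    mul_add, pwaveUnit_mul, add_comm]

theorem Sz_mul_rotZ : Sz * rotZ = -Sz := by
  simp [rotZ_eq_pwaveUnit, Sz_eq_pwaveUnit, sub_eq_add_neg, add_mul, mul_add, pwaveUnit_mul,
    add_comm]

theorem rotX_mul_Sx : rotX * Sx = -Sx := by
  simp [rotX_eq_pwaveUnit, Sx_eq_pwaveUnit, sub_eq_add_neg, add_mul, mul_add, pwaveUnit_mul,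
    add_comm]

theorem Sy_mul_rotZ : Sy * rotZ = -I • sigx := by
  simp [rotZ_eq_pwaveUnit, Sy_eq_sigy, sigy_eq_pwaveUnit, sigx_eq_pwaveUnit, sub_eq_add_neg,
    add_mul, mul_add, pwaveUnit_mul, add_comm]

theorem rotX_mul_Sy : rotX * Sy = -I • sigx := by
  simp [rotX_eq_pwaveUnit, Sy_eq_sigy, sigy_eq_pwaveUnit, sigx_eq_pwaveUnit, sub_mul, mul_add,
    pwaveUnit_mul]

end Rotation

section KTFactor

variable {L : ℕ} {A B : Matrix (Fin 3) (Fin 3) ℂ} {a b : ℕ} {j u v : Fin L}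

theorem isIdempotentElem_site_sq (hA : A ^ 3 = A) (j : Fin L) :
    IsIdempotentElem (site (A ^ 2) j) :=
  (isIdempotentElem_sq_of_pow_three_eq hA).map (siteHom j)

theorem ktFactor_eq_reflection (huv : u ≠ v) :
    ktFactor u v = reflection (site (Sz ^ 2) u * site (Sx ^ 2) v) := by
  have hcomm := site_commute_of_ne Sz Sx huv
  have hpow (m : ℕ) : (site Sz u * site Sx v) ^ m = site (Sz ^ m) u * site (Sx ^ m) v := by
    rw [hcomm.mul_pow, ← siteHom_apply, ← siteHom_apply, ← map_pow, ← map_pow]; rfl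
  rw [ktFactor, exp_pi_mul_I_smul_of_pow_three_eq, hpow]
  rw [hpow, Sz_pow_three, Sx_pow_three]

theorem ktFactor_mul_self (huv : u ≠ v) : ktFactor u v * ktFactor u v = 1 := by
  rw [ktFactor_eq_reflection huv]
  exact reflection_mul_self <|
    (isIdempotentElem_site_sq Sz_pow_three u).mul_of_commute (site_commute_of_ne _ _ huv)
      (isIdempotentElem_site_sq Sx_pow_three v)

theorem ktFactor_commute_site (huv : u ≠ v) (hz : j = u → Commute B (Sz ^ 2))
    (hx : j = v → Commute B (Sx ^ 2)) : Commute (ktFactor u v) (site B j) := by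
  rw [ktFactor_eq_reflection huv]
  exact (commute_reflection_right ((site_commute hz).mul_right (site_commute hx))).symm

theorem ktFactor_mul_site_left (huv : u ≠ v) (hA : HasParity a b A) :
    ktFactor u v * site A u = site A u * site (rotX ^ a) v * ktFactor u v := by
  rw [ktFactor_eq_reflection huv, rotX, site_reflection_pow]
  exact reflection_mul_mul (isIdempotentElem_site_sq Sx_pow_three v) (site_commute_of_ne _ _ huv)
    (site_commute_of_ne _ _ huv) (reflection_site_mul_site hA.1 u)

theorem ktFactor_mul_site_right (huv : u ≠ v) (hA : HasParity a b A) :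
    ktFactor u v * site A v = site A v * site (rotZ ^ b) u * ktFactor u v := by
  rw [ktFactor_eq_reflection huv, (site_commute_of_ne _ _ huv).eq, rotZ, site_reflection_pow]
  exact reflection_mul_mul (isIdempotentElem_site_sq Sz_pow_three u)
    (site_commute_of_ne _ _ huv.symm) (site_commute_of_ne _ _ huv.symm)
    (reflection_site_mul_site hA.2 v)

end KTFactor

section KennedyTasaki

variable {L : ℕ} {A : Matrix (Fin 3) (Fin 3) ℂ} {a b : ℕ} {j k : Fin L}

/-- The pairs of sites `u < v`, in the order in which they occur in `UKT`. -/
def orderedPairs (L : ℕ) : List (Fin L × Fin L) :=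
  (List.finRange L ×ˢ List.finRange L).filter fun p => p.1 < p.2

theorem mem_orderedPairs {p : Fin L × Fin L} : p ∈ orderedPairs L ↔ p.1 < p.2 := by
  rw [orderedPairs, List.mem_filter, decide_eq_true_iff]
  exact and_iff_right (List.mem_product.2 ⟨List.mem_finRange _, List.mem_finRange _⟩)

theorem nodup_orderedPairs : (orderedPairs L).Nodup :=
  ((List.nodup_finRange L).product (List.nodup_finRange L)).filter _

theorem UKT_eq_prod_orderedPairs :
    UKT L = ((orderedPairs L).map fun p => ktFactor p.1 p.2).prod := by
  rw [UKT, list_prod_map_prod_map, list_prod_map_ite_one]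
  rfl

theorem UKT_mul_self : UKT L * UKT L = 1 := by
  rw [UKT_eq_prod_orderedPairs]
  refine list_prod_mul_self_eq_one
    (fun p hp => ktFactor_mul_self (mem_orderedPairs.1 hp).ne) fun p hp q hq => ?_
  rw [ktFactor_eq_reflection (mem_orderedPairs.1 hq).ne]
  have hpne := (mem_orderedPairs.1 hp).ne
  exact commute_reflection_right <|
    (ktFactor_commute_site hpne (fun _ => .refl _) fun _ => commute_Sz_sq_Sx_sq).mul_right
      (ktFactor_commute_site hpne (fun _ => commute_Sz_sq_Sx_sq.symm) fun _ => .refl _)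

/-- What moving an operator of parity `(a, b)` on site `j` through `ktFactor p.1 p.2` leaves behind,
as a family of one-site operators. -/
def ktDefect (a b : ℕ) (j : Fin L) (p : Fin L × Fin L) : Fin L → Matrix (Fin 3) (Fin 3) ℂ :=
  if p.1 = j then Pi.mulSingle p.2 (rotX ^ a)
  else if p.2 = j then Pi.mulSingle p.1 (rotZ ^ b)
  else 1

theorem ktFactor_mul_site {p : Fin L × Fin L} (hp : p.1 ≠ p.2) (hA : HasParity a b A)
    (j : Fin L) :
    ktFactor p.1 p.2 * site A j =
      site A j * piKronecker (ktDefect a b j p) * ktFactor p.1 p.2 := by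
  unfold ktDefect
  split_ifs with h₁ h₂
  · rw [← h₁, ktFactor_mul_site_left hp hA, site_eq_piKronecker (rotX ^ a)]
  · rw [← h₂, ktFactor_mul_site_right hp hA, site_eq_piKronecker (rotZ ^ b)]
  · rw [map_one, mul_one]
    exact ktFactor_commute_site hp (fun h => absurd h.symm h₁) fun h => absurd h.symm h₂

theorem commute_rotX_pow_sq (a : ℕ) : Commute (rotX ^ a) (Sz ^ 2) ∧ Commute (rotX ^ a) (Sx ^ 2) :=
  ⟨(commute_reflection_right commute_Sz_sq_Sx_sq).symm.pow_left a,
    (commute_reflection_right (.refl _)).symm.pow_left a⟩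

theorem commute_rotZ_pow_sq (b : ℕ) : Commute (rotZ ^ b) (Sz ^ 2) ∧ Commute (rotZ ^ b) (Sx ^ 2) :=
  ⟨(commute_reflection_right (.refl _)).symm.pow_left b,
    (commute_reflection_right commute_Sz_sq_Sx_sq.symm).symm.pow_left b⟩

theorem ktFactor_commute_ktDefect {p : Fin L × Fin L} (hp : p.1 ≠ p.2) (q : Fin L × Fin L) :
    Commute (ktFactor p.1 p.2) (piKronecker (ktDefect a b j q)) := by
  unfold ktDefect
  split_ifs
  · rw [← site_eq_piKronecker]
    exact ktFactor_commute_site hp (fun _ => (commute_rotX_pow_sq a).1)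
      fun _ => (commute_rotX_pow_sq a).2
  · rw [← site_eq_piKronecker]
    exact ktFactor_commute_site hp (fun _ => (commute_rotZ_pow_sq b).1)
      fun _ => (commute_rotZ_pow_sq b).2
  · rw [map_one]
    exact .one_right _

/-- The nonlocal string `(⨂ w < j, exp(iπb Sᶻ)) ⊗ A ⊗ (⨂ w > j, exp(iπa Sˣ))` dual to an operator
`A` of parity `(a, b)` on site `j`. -/
def ktString (a b : ℕ) (A : Matrix (Fin 3) (Fin 3) ℂ) (j w : Fin L) : Matrix (Fin 3) (Fin 3) ℂ :=
  if w < j then rotZ ^ b else if w = j then A else rotX ^ a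

theorem ktDefect_apply {p : Fin L × Fin L} (hp : p.1 ≠ p.2) (w : Fin L) :
    ktDefect a b j p w = if p = (j, w) then rotX ^ a else if p = (w, j) then rotZ ^ b else 1 := by
  obtain ⟨u, v⟩ := p
  simp only [ktDefect, Prod.mk.injEq]
  split_ifs <;> simp_all

theorem mulSingle_mul_prod_ktDefect (a b : ℕ) (A : Matrix (Fin 3) (Fin 3) ℂ) (j : Fin L) :
    Pi.mulSingle j A * ((orderedPairs L).map (ktDefect a b j)).prod = ktString a b A j := by
  funext w
  have hdefect : ∀ p ∈ orderedPairs L, ktDefect a b j p w =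
      if p = (j, w) then rotX ^ a else if p = (w, j) then rotZ ^ b else 1 :=
    fun p hp => ktDefect_apply (mem_orderedPairs.1 hp).ne w
  rw [Pi.mul_apply, Pi.list_prod_apply, List.map_map, Function.comp_def,
    List.map_congr_left hdefect]
  have hlt {p : Fin L × Fin L} (hp : p ∈ orderedPairs L) := mem_orderedPairs.1 hp
  rcases lt_trichotomy w j with hw | rfl | hw
  · rw [list_prod_map_eq_of_forall_ne nodup_orderedPairs (mem_orderedPairs.2 hw : (w, j) ∈ _)]
    · simp [ktString, hw, hw.ne]
    · intro p hp hne
      rw [if_neg (by rintro rfl; exact hw.not_gt (hlt hp)), if_neg hne]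
  · rw [List.prod_eq_one, ktString]
    · simp
    · simp only [List.forall_mem_map]
      intro p hp
      have hne : p ≠ (w, w) := by rintro rfl; exact (hlt hp).false
      rw [if_neg hne, if_neg hne]
  · rw [list_prod_map_eq_of_forall_ne nodup_orderedPairs (mem_orderedPairs.2 hw : (j, w) ∈ _)]
    · simp [ktString, hw.not_gt, hw.ne']
    · intro p hp hne
      rw [if_neg hne, if_neg (by rintro rfl; exact hw.not_gt (hlt hp))]

theorem UKT_mul_site (hA : HasParity a b A) (j : Fin L) :
    UKT L * site A j = piKronecker (ktString a b A j) * UKT L := by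
  have hne {p : Fin L × Fin L} (hp : p ∈ orderedPairs L) := (mem_orderedPairs.1 hp).ne
  rw [UKT_eq_prod_orderedPairs, list_prod_mul_of_forall_mul
    (fun p hp => ktFactor_mul_site (hne hp) hA j)
    (fun p hp q _ => ktFactor_commute_ktDefect (hne hp) q), ← mulSingle_mul_prod_ktDefect,
    map_mul, map_list_prod, List.map_map, site_eq_piKronecker]
  rfl

/-- Conjugation by the involution `UKT L`. -/
def ktDual (L : ℕ) : Op L →ₐ[ℂ] Op L :=
  AlgHom.ofLinearMap (LinearMap.mulLeftRight ℂ (UKT L, UKT L))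
    (by simp [UKT_mul_self])
    fun X Y => by
      simp only [LinearMap.mulLeftRight_apply]
      calc UKT L * (X * Y) * UKT L
          = UKT L * X * (UKT L * UKT L) * Y * UKT L := by
            rw [UKT_mul_self]; simp only [mul_assoc, one_mul]
        _ = UKT L * X * UKT L * (UKT L * Y * UKT L) := by simp only [mul_assoc]

theorem ktDual_apply (X : Op L) : ktDual L X = UKT L * X * UKT L := rfl

theorem ktDual_site (hA : HasParity a b A) (j : Fin L) :
    ktDual L (site A j) = piKronecker (ktString a b A j) := by
  rw [ktDual_apply, UKT_mul_site hA, mul_assoc, UKT_mul_self, mul_one]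

/-- The two strings overlap in squares of `π`-rotations, except on the bond itself. -/
theorem ktDual_bond (hjk : j ⋖ k) (hA : HasParity a b A) :
    ktDual L (bond A j k) = site (A * rotZ ^ b) j * site (rotX ^ a * A) k := by
  rw [bond, map_mul, ktDual_site hA, ktDual_site hA, site_eq_piKronecker, site_eq_piKronecker,
    ← map_mul, ← map_mul]
  congr 1
  funext w
  simp only [Pi.mul_apply, ktString]
  rcases lt_trichotomy w j with hw | rfl | hw
  · simp [hw, hw.trans hjk.lt, hw.ne, (hw.trans hjk.lt).ne, rotZ_pow_mul_self]
  · simp [hjk.lt, hjk.ne]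
  · rcases (hjk.ge_of_gt hw).eq_or_lt with rfl | hkw
    · simp [hw.not_gt, hw.ne']
    · simp [hw.not_gt, hw.ne', hkw.not_gt, hkw.ne', rotX_pow_mul_self]

end KennedyTasaki

section Bond

variable {L : ℕ} {j k : Fin L}

theorem heis_eq_bond (j k : Fin L) : heis j k = bond Sx j k + bond sigy j k + bond Sz j k := by
  rw [← Sy_eq_sigy]; rfl

theorem ktDual_bond_Sx (hjk : j ⋖ k) : ktDual L (bond Sx j k) = -bond Sx j k := by
  rw [ktDual_bond hjk hasParity_Sx, pow_zero, mul_one, pow_one, rotX_mul_Sx, site_neg,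
    mul_neg, ← bond]

theorem ktDual_bond_Sz (hjk : j ⋖ k) : ktDual L (bond Sz j k) = -bond Sz j k := by
  rw [ktDual_bond hjk hasParity_Sz, pow_zero, one_mul, pow_one, Sz_mul_rotZ, site_neg,
    neg_mul, ← bond]

theorem ktDual_bond_Sy (hjk : j ⋖ k) : ktDual L (bond Sy j k) = -bond sigx j k := by
  rw [ktDual_bond hjk hasParity_Sy, pow_one, pow_one, Sy_mul_rotZ, rotX_mul_Sy, ← bond, bond_smul,
    neg_sq, I_sq, neg_one_smul]

theorem ktDual_heis (hjk : j ⋖ k) :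
    ktDual L (heis j k) = -(bond Sx j k + bond sigx j k + bond Sz j k) := by
  rw [heis_eq_bond, ← Sy_eq_sigy, map_add, map_add, ktDual_bond_Sx hjk, ktDual_bond_Sy hjk,
    ktDual_bond_Sz hjk]
  abel

theorem heis_add_ktDual_heis (hjk : j ⋖ k) :
    heis j k + ktDual L (heis j k) = -bond sigx j k + bond sigy j k := by
  rw [ktDual_heis hjk, heis_eq_bond]
  abel

theorem sigx_sq : sigx ^ 2 = nMat := by
  simp [sigx_eq_pwaveUnit, nMat_eq_pwaveUnit, sq, add_mul, mul_add, pwaveUnit_mul, add_comm]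

theorem sigy_sq : sigy ^ 2 = nMat := by
  simp [sigy_eq_pwaveUnit, nMat_eq_pwaveUnit, sq, add_mul, mul_add, pwaveUnit_mul, smul_smul,
    add_comm]

theorem Sx_mul_sigy : Sx * sigy = I • (Sx * sigx) := by
  simp [Sx_eq_pwaveUnit, sigx_eq_pwaveUnit, sigy_eq_pwaveUnit, add_mul, mul_add, pwaveUnit_mul]

theorem sigy_mul_Sx : sigy * Sx = -I • (sigx * Sx) := by
  simp [Sx_eq_pwaveUnit, sigx_eq_pwaveUnit, sigy_eq_pwaveUnit, add_mul, mul_add, pwaveUnit_mul]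

theorem Sz_mul_sigy : Sz * sigy = -I • (Sz * sigx) := by
  simp [Sz_eq_pwaveUnit, sigx_eq_pwaveUnit, sigy_eq_pwaveUnit, add_mul, mul_add, pwaveUnit_mul]

theorem sigy_mul_Sz : sigy * Sz = I • (sigx * Sz) := by
  simp [Sz_eq_pwaveUnit, sigx_eq_pwaveUnit, sigy_eq_pwaveUnit, add_mul, mul_add, pwaveUnit_mul]

theorem Sx_mul_Sz : Sx * Sz = pwaveUnit 1 0 := by
  simp [Sx_eq_pwaveUnit, Sz_eq_pwaveUnit, add_mul, mul_add, pwaveUnit_mul]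

theorem Sz_mul_Sx : Sz * Sx = pwaveUnit 0 1 := by
  simp [Sx_eq_pwaveUnit, Sz_eq_pwaveUnit, add_mul, mul_add, pwaveUnit_mul]

theorem two_smul_bond_Sx_mul_bond_Sz_add (hjk : j ≠ k) :
    (2 : ℂ) • (bond Sx j k * bond Sz j k + bond Sz j k * bond Sx j k) =
      bond sigx j k - bond sigy j k := by
  rw [bond_mul hjk, bond_mul hjk, Sx_mul_Sz, Sz_mul_Sx, sigx_eq_pwaveUnit, sigy_eq_pwaveUnit]
  simp only [bond, ← siteHom_apply, map_add, map_smul, add_mul, mul_add, smul_mul_smul_comm,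
    neg_mul, mul_neg, I_mul_I, neg_neg]
  module

theorem two_smul_bond_Sx_sq_add_bond_Sz_sq_add_bond_nMat (j k : Fin L) :
    (2 : ℂ) • (bond (Sx ^ 2) j k + bond (Sz ^ 2) j k + bond nMat j k) =
      bond sigz j k + (2 : ℂ) • bond hMat j k + bond nMat j k + 2 := by
  have hone (i : Fin L) : (1 : Op L) =
      site (pwaveUnit 0 0) i + site (pwaveUnit 1 1) i + site (pwaveUnit 2 2) i := by
    simp only [← siteHom_apply, ← map_add, ← one_eq_pwaveUnit, map_one]
  have htwo : (2 : Op L) = 2 •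
      ((site (pwaveUnit 0 0) j + site (pwaveUnit 1 1) j + site (pwaveUnit 2 2) j) *
      (site (pwaveUnit 0 0) k + site (pwaveUnit 1 1) k + site (pwaveUnit 2 2) k)) := by
    rw [← hone, ← hone]; norm_num
  rw [htwo, Sx_sq, Sz_sq, sigz_eq_pwaveUnit, hMat_eq_pwaveUnit, nMat_eq_pwaveUnit]
  simp only [bond, ← siteHom_apply, map_add, map_sub, add_mul, mul_add, sub_mul, mul_sub]
  module

/-- Multiplied by `Sˣ` or `Sᶻ`, `σʸ` and `σˣ` agree up to a factor `±i` per site, hence up to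
`-1` on a bond, so the mixed terms of the two squares cancel. -/
theorem heis_sq_add_ktDual_heis_sq (hjk : j ⋖ k) :
    heis j k ^ 2 + ktDual L (heis j k) ^ 2 = bond sigx j k - bond sigy j k +
      (bond sigz j k + (2 : ℂ) • bond hMat j k + bond nMat j k + 2) := by
  have hI : I ^ 2 = -1 := I_sq
  have hnegI : (-I) ^ 2 = -1 := by rw [neg_sq, I_sq]
  rw [ktDual_heis hjk, neg_sq, heis_eq_bond, sq_add_sq_of_mul_eq_neg_mul
    (bond_mul_bond_eq_neg hjk.ne hI Sx_mul_sigy) (bond_mul_bond_eq_neg hjk.ne hnegI sigy_mul_Sx)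
    (bond_mul_bond_eq_neg hjk.ne hnegI Sz_mul_sigy) (bond_mul_bond_eq_neg hjk.ne hI sigy_mul_Sz),
    bond_sq hjk.ne, bond_sq hjk.ne, bond_sq hjk.ne, bond_sq hjk.ne, sigx_sq, sigy_sq,
    ← two_smul_bond_Sx_mul_bond_Sz_add hjk.ne,
    ← two_smul_bond_Sx_sq_add_bond_Sz_sq_add_bond_nMat]
  module

theorem smul_heis_add_smul_heis_sq_add_ktDual (c s : ℂ) (hjk : j ⋖ k) :
    c • heis j k + s • heis j k ^ 2 + ktDual L (c • heis j k + s • heis j k ^ 2) =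
      (c - s) • (-bond sigx j k + bond sigy j k) + s • bond sigz j k +
        s • ((2 : ℂ) • bond hMat j k + bond nMat j k + 2) := by
  calc c • heis j k + s • heis j k ^ 2 + ktDual L (c • heis j k + s • heis j k ^ 2)
      = c • (heis j k + ktDual L (heis j k)) + s • (heis j k ^ 2 + ktDual L (heis j k) ^ 2) := by
        rw [map_add, map_smul, map_smul, map_pow]; module
    _ = _ := by
        rw [heis_add_ktDual_heis hjk, heis_sq_add_ktDual_heis_sq hjk]; module

end Bond

/-- The self-dual Hamiltonian satisfies the exact operator identity
`H_SD(θ) = H_XXZ(θ) + sinθ Σ_{j=1}^{L−1} (2 h_j h_{j+1} + n_j n_{j+1} + 2)`. -/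
theorem HSD_exact_identity (L : ℕ) (hL : 2 ≤ L) (θ : ℝ) :
    HSD L θ =
      HXXZ L θ +
        ((Real.sin θ : ℝ) : ℂ) •
          ∑ j : Fin L, if h : (j : ℕ) + 1 < L then
            (2 : ℂ) • (site hMat j * site hMat ⟨(j : ℕ) + 1, h⟩)
              + site nMat j * site nMat ⟨(j : ℕ) + 1, h⟩ + 2
          else 0 := by
  rw [HSD, ← ktDual_apply, HBLBQ, HXXZ, map_sum, Finset.smul_sum, Finset.smul_sum, Finset.smul_sum,
    ← Finset.sum_add_distrib, ← Finset.sum_add_distrib, ← Finset.sum_add_distrib]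
  refine Finset.sum_congr rfl fun j _ => ?_
  by_cases h : (j : ℕ) + 1 < L
  · have hcov : j ⋖ ⟨j + 1, h⟩ := Fin.covBy_iff.2 (Nat.covBy_iff_add_one_eq.2 rfl)
    simp only [dif_pos h, ofReal_sub]
    exact smul_heis_add_smul_heis_sq_add_ktDual _ _ hcov
  · simp only [dif_neg h, map_zero, smul_zero, add_zero]

end
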